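/- arXiv:2309.02439 — 4 statements merged into one kernel-verified Lean document; each statement's English description precedes it below -/
import Mathlib

section
/- Let μ > 0, c ∈ ℝ, x₀ ∈ ℝ and set k = 1/(2√μ). Then the function U : ℝ × ℝ → ℝ defined by U(x,t) = 3c · sech²(k(x − x₀ − c·t)) is a classical solution of the Equal Width (EW) equation, i.e. for all (x,t) ∈ ℝ × ℝ one has ∂ₜU(x,t) + U(x,t)·∂ₓU(x,t) − μ·∂ₓ∂ₓ∂ₜU(x,t) = 0. -/
open Real

/-!
For a travelling wave `U(x, t) = φ(x - x₀ - ct)` the Equal Width equation becomes the ordinary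
differential equation `-cφ' + φφ' + cμφ''' = 0`, the derivative of `cμφ'' = cφ - φ²/2 + A`. Since
`(sech²)'' = 4 sech² - 6 sech⁴`, the profile `φ(ξ) = 3c sech²(kξ)` satisfies the latter with
`A = 0` as soon as `4μk² = 1`.
-/

/-- The hyperbolic secant, written `1 / cosh y` as in the formula for the solitary wave. -/
noncomputable def sech (y : ℝ) : ℝ := 1 / cosh y

theorem tanh_sq_eq_one_sub_sech_sq (y : ℝ) : tanh y ^ 2 = 1 - sech y ^ 2 := by
  have hcosh : cosh y ≠ 0 := (cosh_pos y).ne'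
  rw [tanh_eq_sinh_div_cosh, sech, div_pow, sinh_sq]
  field_simp

theorem hasDerivAt_tanh (y : ℝ) : HasDerivAt tanh (sech y ^ 2) y := by
  have hquot := (hasDerivAt_sinh y).fun_div (hasDerivAt_cosh y) (cosh_pos y).ne'
  rw [← funext tanh_eq_sinh_div_cosh] at hquot
  refine hquot.congr_deriv ?_
  rw [← pow_two, ← pow_two, cosh_sq_sub_sinh_sq, sech, one_div_pow]

theorem hasDerivAt_sech (y : ℝ) : HasDerivAt sech (-(sech y * tanh y)) y := by
  have hcosh : cosh y ≠ 0 := (cosh_pos y).ne'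
  refine ((hasDerivAt_const y 1).div (hasDerivAt_cosh y) hcosh).congr_deriv ?_
  rw [tanh_eq_sinh_div_cosh, sech]
  field_simp
  ring

theorem hasDerivAt_sech_sq (y : ℝ) :
    HasDerivAt (fun z => sech z ^ 2) (-2 * (sech y ^ 2 * tanh y)) y :=
  ((hasDerivAt_sech y).fun_pow 2).congr_deriv (by push_cast; ring)

theorem deriv_deriv_sech_sq (y : ℝ) :
    deriv (deriv fun z => sech z ^ 2) y = 4 * sech y ^ 2 - 6 * sech y ^ 4 := by
  rw [funext fun z => (hasDerivAt_sech_sq z).deriv,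
    (((hasDerivAt_sech_sq y).fun_mul (hasDerivAt_tanh y)).const_mul (-2)).deriv]
  linear_combination 4 * sech y ^ 2 * tanh_sq_eq_one_sub_sech_sq y

/-- The left-hand side `Uₜ + U·Uₓ − μ·U_{xxt}` of the Equal Width equation at `(x, t)`. The time
derivative in `U_{xxt}` is taken first. -/
noncomputable def equalWidthResidual (μ : ℝ) (U : ℝ → ℝ → ℝ) (x t : ℝ) : ℝ :=
  deriv (fun s => U x s) t
    + U x t * deriv (fun y => U y t) x
    - μ * deriv (fun y => deriv (fun z => deriv (fun s => U z s) t) y) x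

/-- The wave of profile `φ` moving with speed `c`, centred at `x₀` at time `0`. -/
def travellingWave (φ : ℝ → ℝ) (c x₀ x t : ℝ) : ℝ := φ (x - x₀ - c * t)

/-- The profile `3c·sech²(kξ)` of the solitary wave of speed `c`. -/
noncomputable def solitaryProfile (c k ξ : ℝ) : ℝ := 3 * c * sech (k * ξ) ^ 2

theorem deriv_travellingWave_space (φ : ℝ → ℝ) (c x₀ x t : ℝ) :
    deriv (fun y => travellingWave φ c x₀ y t) x = travellingWave (deriv φ) c x₀ x t := by
  simp only [travellingWave, sub_sub, deriv_comp_sub_const]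

theorem deriv_travellingWave_time (φ : ℝ → ℝ) (c x₀ x t : ℝ) :
    deriv (fun s => travellingWave φ c x₀ x s) t = -c * travellingWave (deriv φ) c x₀ x t := by
  simp only [travellingWave]
  rw [deriv_comp_mul_left c (fun r => φ (x - x₀ - r)), deriv_comp_const_sub, smul_eq_mul]
  ring

theorem equalWidthResidual_travellingWave (μ : ℝ) (φ : ℝ → ℝ) (c x₀ x t : ℝ) :
    equalWidthResidual μ (travellingWave φ c x₀) x t =
      travellingWave
        (fun ξ => -c * deriv φ ξ + φ ξ * deriv φ ξ + c * μ * deriv (deriv (deriv φ)) ξ)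
        c x₀ x t := by
  simp only [equalWidthResidual, deriv_travellingWave_time, deriv_const_mul_field,
    deriv_travellingWave_space]
  simp only [travellingWave]
  ring

theorem equalWidthResidual_travellingWave_eq_zero {μ c A : ℝ} {φ : ℝ → ℝ}
    (hφ : Differentiable ℝ φ)
    (hode : ∀ ξ, c * μ * deriv (deriv φ) ξ = c * φ ξ - φ ξ ^ 2 / 2 + A) (x₀ x t : ℝ) :
    equalWidthResidual μ (travellingWave φ c x₀) x t = 0 := by
  have hode_deriv (ξ : ℝ) :
      c * μ * deriv (deriv (deriv φ)) ξ = c * deriv φ ξ - φ ξ * deriv φ ξ := by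
    have hφξ := (hφ ξ).hasDerivAt
    rw [← deriv_const_mul_field, funext hode,
      (((hφξ.const_mul c).fun_sub ((hφξ.fun_pow 2).div_const 2)).add_const A).deriv]
    push_cast
    ring
  rw [equalWidthResidual_travellingWave, travellingWave, hode_deriv]
  ring

theorem differentiable_solitaryProfile (c k : ℝ) : Differentiable ℝ (solitaryProfile c k) := by
  have hsech : Differentiable ℝ sech := fun y => (hasDerivAt_sech y).differentiableAt
  unfold solitaryProfile
  fun_prop

theorem deriv_deriv_solitaryProfile (c k ξ : ℝ) :
    deriv (deriv (solitaryProfile c k)) ξ =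
      3 * c * k ^ 2 * (4 * sech (k * ξ) ^ 2 - 6 * sech (k * ξ) ^ 4) := by
  have hderiv : deriv (solitaryProfile c k) =
      fun ζ => 3 * c * (k * deriv (fun z => sech z ^ 2) (k * ζ)) := by
    funext ζ
    unfold solitaryProfile
    rw [deriv_const_mul_field, deriv_comp_mul_left k (fun z => sech z ^ 2), smul_eq_mul]
  rw [hderiv, deriv_const_mul_field, deriv_const_mul_field, deriv_comp_mul_left, smul_eq_mul,
    deriv_deriv_sech_sq]
  ring

theorem solitaryProfile_ode {μ k : ℝ} (hμk : 4 * μ * k ^ 2 = 1) (c ξ : ℝ) :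
    c * μ * deriv (deriv (solitaryProfile c k)) ξ =
      c * solitaryProfile c k ξ - solitaryProfile c k ξ ^ 2 / 2 := by
  rw [deriv_deriv_solitaryProfile]
  unfold solitaryProfile
  linear_combination
    (3 * c ^ 2 * sech (k * ξ) ^ 2 - 9 / 2 * c ^ 2 * sech (k * ξ) ^ 4) * hμk

/-- The solitary wave `U(x,t) = 3c·sech²(k(x − x₀ − c·t))` with `k = 1/(2√μ)` is a
classical solution of the Equal Width equation `Uₜ + U·Uₓ − μ·U_{xxt} = 0`. -/
theorem ew_single_solitary_wave_solution
    (μ c x₀ : ℝ) (hμ : 0 < μ) (k : ℝ) (hk : k = 1 / (2 * Real.sqrt μ))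
    (U : ℝ → ℝ → ℝ)
    (hU : ∀ x t, U x t = 3 * c * (1 / Real.cosh (k * (x - x₀ - c * t))) ^ 2) :
    ∀ x t : ℝ,
      deriv (fun s => U x s) t
        + U x t * deriv (fun y => U y t) x
        - μ * deriv (fun y => deriv (fun z => deriv (fun s => U z s) t) y) x = 0 := by
  intro x t
  have hμk : 4 * μ * k ^ 2 = 1 := by
    rw [hk, div_pow, mul_pow, sq_sqrt hμ.le]
    field_simp
    norm_num
  have hwave : U = travellingWave (solitaryProfile c k) c x₀ := by
    funext y s
    exact hU y s
  change equalWidthResidual μ U x t = 0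
  rw [hwave]
  refine equalWidthResidual_travellingWave_eq_zero (A := 0)
    (differentiable_solitaryProfile c k) (fun ξ => ?_) x₀ x t
  rw [add_zero, solitaryProfile_ode hμk]
end

section
/- Let μ ∈ ℝ and let U : ℝ × ℝ → ℝ be a smooth solution of the EW equation ∂ₜU + U·∂ₓU − μ·∂ₓ∂ₓ∂ₜU = 0. Fix t ∈ ℝ and assume: (i) the functions x ↦ ∂ₜU(x,t), x ↦ ∂ₓ∂ₓ∂ₜU(x,t) and x ↦ U(x,t)²·∂ₜU(x,t) are integrable on ℝ; (ii) U(x,t), ∂ₜU(x,t) and ∂ₓ∂ₜU(x,t) all tend to 0 as x → ±∞; (iii) the antiderivative g(x) = ∫_{−∞}^{x} ( ∂ₜU(y,t) − μ·∂ₓ∂ₓ∂ₜU(y,t) ) dy satisfies g(x) = −U(x,t)²/2 for all x. Then ∫_{−∞}^{∞} 3·U(x,t)²·∂ₜU(x,t) dx = 0, i.e. the third invariant I₃ = ∫ U³ dx has zero rate of change at time t. -/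
open Real MeasureTheory Filter

/-!
The EW equation is the conservation law `Uₜ = Vₓ` with `V = μ Uₓₜ - U² / 2`. Eliminating `U²`,
`U² Uₜ = 2 (μ Uₓₜ - V) Uₜ = 2 μ Uₜ Uₓₜ - 2 V Vₓ = (μ Uₜ² - V²)ₓ`,
so `3 U² Uₜ` is a total `x`-derivative and its integral is determined by the limits at `±∞`.
-/

theorem contDiff_deriv_snd {𝕜 E F : Type*} [NontriviallyNormedField 𝕜]
    [NormedAddCommGroup E] [NormedSpace 𝕜 E] [NormedAddCommGroup F] [NormedSpace 𝕜 F]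
    {m n : WithTop ℕ∞} {f : E → 𝕜 → F} (hf : ContDiff 𝕜 n (fun p : E × 𝕜 => f p.1 p.2))
    (hmn : m + 1 ≤ n) (t : 𝕜) :
    ContDiff 𝕜 m (fun x => deriv (fun s => f x s) t) := by
  have hfderiv : ContDiff 𝕜 m (fun x => fderiv 𝕜 (f x) t 1) :=
    (hf.fderiv contDiff_const hmn).clm_apply contDiff_const
  simpa only [fderiv_apply_one_eq_deriv] using hfderiv

namespace EqualWidth

variable {𝕜 : Type*} [RCLike 𝕜] {μ : 𝕜} {u v : ℝ → 𝕜} {x : ℝ}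

/-- The flux `V = μ Uₓₜ - U² / 2` for which the EW equation reads `Uₜ = Vₓ`. The arguments `u` and
`v` stand for the profiles of `U` and `Uₜ` at a fixed time. -/
noncomputable def massFlux (μ : 𝕜) (u v : ℝ → 𝕜) (x : ℝ) : 𝕜 :=
  μ * deriv v x - u x ^ 2 / 2

/-- The flux `Q = 3 (μ Uₜ² - V²)` in the conservation law `(U³)ₜ = Qₓ`, where `V` is `massFlux`
and `u`, `v` again stand for the profiles of `U` and `Uₜ` at a fixed time. -/
noncomputable def cubicFlux (μ : 𝕜) (u v : ℝ → 𝕜) (x : ℝ) : 𝕜 :=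
  3 * (μ * v x ^ 2 - massFlux μ u v x ^ 2)

theorem hasDerivAt_massFlux (hu : DifferentiableAt ℝ u x)
    (hv' : DifferentiableAt ℝ (deriv v) x)
    (hEW : v x + u x * deriv u x - μ * deriv (deriv v) x = 0) :
    HasDerivAt (massFlux μ u v) (v x) x := by
  have hderiv : HasDerivAt (massFlux μ u v)
      (μ * deriv (deriv v) x - 2 * u x * deriv u x / 2) x :=
    ((hv'.hasDerivAt.const_mul μ).sub ((hu.hasDerivAt.pow 2).div_const 2)).congr_deriv
      (by norm_num)
  exact hderiv.congr_deriv (by linear_combination -hEW)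

theorem hasDerivAt_cubicFlux (hu : DifferentiableAt ℝ u x) (hv : DifferentiableAt ℝ v x)
    (hv' : DifferentiableAt ℝ (deriv v) x)
    (hEW : v x + u x * deriv u x - μ * deriv (deriv v) x = 0) :
    HasDerivAt (cubicFlux μ u v) (3 * u x ^ 2 * v x) x := by
  have hderiv : HasDerivAt (cubicFlux μ u v)
      (3 * (μ * (2 * v x * deriv v x) - 2 * massFlux μ u v x * v x)) x :=
    ((((hv.hasDerivAt.pow 2).const_mul μ).sub
      ((hasDerivAt_massFlux hu hv' hEW).pow 2)).const_mul 3).congr_deriv (by norm_num)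
  exact hderiv.congr_deriv (by rw [massFlux]; ring)

theorem tendsto_cubicFlux {l : Filter ℝ} {a : 𝕜} (hu : Tendsto u l (nhds a))
    (hv : Tendsto v l (nhds 0)) (hv' : Tendsto (deriv v) l (nhds 0)) :
    Tendsto (cubicFlux μ u v) l (nhds (-(3 / 4) * a ^ 4)) := by
  have hmass : Tendsto (massFlux μ u v) l (nhds (μ * 0 - a ^ 2 / 2)) :=
    (hv'.const_mul μ).sub ((hu.pow 2).div_const 2)
  have hcubic : Tendsto (cubicFlux μ u v) l
      (nhds (3 * (μ * 0 ^ 2 - (μ * 0 - a ^ 2 / 2) ^ 2))) :=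
    (((hv.pow 2).const_mul μ).sub (hmass.pow 2)).const_mul 3
  convert hcubic using 2
  ring

end EqualWidth

open EqualWidth in
theorem ew_third_invariant_rate_zero_general {𝕜 : Type*} [RCLike 𝕜]
    {μ a b : 𝕜} {U : ℝ → ℝ → 𝕜} {t : ℝ}
    (hreg : ContDiff ℝ 3 (fun p : ℝ × ℝ => U p.1 p.2))
    (hEW : ∀ x : ℝ,
      deriv (fun s => U x s) t
        + U x t * deriv (fun y => U y t) x
        - μ * deriv (fun y => deriv (fun z => deriv (fun s => U z s) t) y) x = 0)
    (hint : Integrable (fun x => (U x t) ^ 2 * deriv (fun s => U x s) t))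
    (hUBot : Tendsto (fun x => U x t) atBot (nhds a))
    (hUTop : Tendsto (fun x => U x t) atTop (nhds b))
    (hUtBot : Tendsto (fun x => deriv (fun s => U x s) t) atBot (nhds 0))
    (hUtTop : Tendsto (fun x => deriv (fun s => U x s) t) atTop (nhds 0))
    (hUxtBot : Tendsto (fun x => deriv (fun z => deriv (fun s => U z s) t) x)
      atBot (nhds 0))
    (hUxtTop : Tendsto (fun x => deriv (fun z => deriv (fun s => U z s) t) x)
      atTop (nhds 0)) :
    ∫ x : ℝ, 3 * (U x t) ^ 2 * deriv (fun s => U x s) t = 3 / 4 * (a ^ 4 - b ^ 4) := by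
  have hU : Differentiable ℝ (fun x => U x t) :=
    (hreg.comp (contDiff_prodMk_left t)).differentiable (by norm_num)
  have hUt : ContDiff ℝ 2 (fun x => deriv (fun s => U x s) t) :=
    contDiff_deriv_snd hreg (by norm_num) t
  have hflux (x : ℝ) : HasDerivAt (cubicFlux μ (fun x => U x t) fun x => deriv (fun s => U x s) t)
      (3 * (U x t) ^ 2 * deriv (fun s => U x s) t) x :=
    hasDerivAt_cubicFlux (hU x) (hUt.differentiable (by norm_num) x)
      (hUt.differentiable_deriv_two x) (hEW x)
  have hint' : Integrable (fun x => 3 * (U x t) ^ 2 * deriv (fun s => U x s) t) := by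
    simpa only [mul_assoc] using hint.const_mul 3
  rw [integral_of_hasDerivAt_of_tendsto hflux hint'
    (tendsto_cubicFlux hUBot hUtBot hUxtBot) (tendsto_cubicFlux hUTop hUtTop hUxtTop)]
  ring

/-- For a smooth solution of the EW equation with suitable decay at spatial infinity,
the third invariant `I₃ = ∫ U³ dx` has zero rate of change:
`∫ 3U²·Uₜ dx = 0`. -/
theorem ew_third_invariant_rate_zero
    (μ : ℝ) (U : ℝ → ℝ → ℝ)
    (hreg : ContDiff ℝ (⊤ : ℕ∞) (fun p : ℝ × ℝ => U p.1 p.2))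
    (hEW : ∀ x t : ℝ,
      deriv (fun s => U x s) t
        + U x t * deriv (fun y => U y t) x
        - μ * deriv (fun y => deriv (fun z => deriv (fun s => U z s) t) y) x = 0)
    (t : ℝ)
    (hint₁ : Integrable (fun x => deriv (fun s => U x s) t))
    (hint₂ : Integrable (fun x =>
      deriv (fun y => deriv (fun z => deriv (fun s => U z s) t) y) x))
    (hint₃ : Integrable (fun x => (U x t) ^ 2 * deriv (fun s => U x s) t))
    (hUTop : Tendsto (fun x => U x t) atTop (nhds 0))
    (hUBot : Tendsto (fun x => U x t) atBot (nhds 0))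
    (hUtTop : Tendsto (fun x => deriv (fun s => U x s) t) atTop (nhds 0))
    (hUtBot : Tendsto (fun x => deriv (fun s => U x s) t) atBot (nhds 0))
    (hUxtTop : Tendsto (fun x => deriv (fun z => deriv (fun s => U z s) t) x)
      atTop (nhds 0))
    (hUxtBot : Tendsto (fun x => deriv (fun z => deriv (fun s => U z s) t) x)
      atBot (nhds 0))
    (hg : ∀ x : ℝ,
      (∫ y in Set.Iic x,
        (deriv (fun s => U y s) t
          - μ * deriv (fun y' => deriv (fun z => deriv (fun s => U z s) t) y') y))
        = -(U x t) ^ 2 / 2) :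
    ∫ x : ℝ, 3 * (U x t) ^ 2 * deriv (fun s => U x s) t = 0 := by
  simpa using ew_third_invariant_rate_zero_general (contDiff_infty.1 hreg 3)
    (hEW · t) hint₃ hUBot hUTop hUtBot hUtTop hUxtBot hUxtTop
end

section
/- Let μ ∈ ℝ, U₀ ∈ ℝ, and let U : ℝ × ℝ → ℝ be a smooth solution of the EW equation ∂ₜU + U·∂ₓU − μ·∂ₓ∂ₓ∂ₜU = 0. Fix t ∈ ℝ and assume that x ↦ 2U(x,t)·∂ₜU(x,t) + 2μ·∂ₓU(x,t)·∂ₓ∂ₜU(x,t) is integrable on ℝ, that U(x,t) → U₀ as x → −∞ and U(x,t) → 0 as x → +∞, and that U(x,t)·∂ₓ∂ₜU(x,t) → 0 as x → ±∞. Then ∫_{−∞}^{∞} ∂ₜ( U² + μ·(∂ₓU)² )(x,t) dx = (2/3)·U₀³; that is, in the undular bore setting the second invariant I₂ increases at the constant rate M₂ = (2/3)U₀³. -/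
open Real MeasureTheory Filter

/-!
Multiplying the EW equation by `2U` and using the symmetry `U_{xt} = U_{tx}` yields the local
conservation law `∂ₜ(U² + μ Uₓ²) = ∂ₓ(2μ U U_{xt} - (2/3) U³)`. Integrating over the line leaves
only the values of the flux at `±∞`, where `U U_{xt}` vanishes and the cubic term is determined by
the limiting elevations.
-/

section PartialDerivatives

open Topology

variable {𝕜 E F : Type*} [NontriviallyNormedField 𝕜] [NormedAddCommGroup E] [NormedSpace 𝕜 E]
  [NormedAddCommGroup F] [NormedSpace 𝕜 F]

lemma hasDerivAt_comp_prodMk_left {f : 𝕜 × E → F} {f' : 𝕜 × E →L[𝕜] F} {x : 𝕜} {y : E}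
    (hf : HasFDerivAt f f' (x, y)) : HasDerivAt (fun z => f (z, y)) (f' (1, 0)) x :=
  hf.comp_hasDerivAt x ((hasDerivAt_id x).prodMk (hasDerivAt_const x y))

lemma hasDerivAt_comp_prodMk_right {f : E × 𝕜 → F} {f' : E × 𝕜 →L[𝕜] F} {x : E} {t : 𝕜}
    (hf : HasFDerivAt f f' (x, t)) : HasDerivAt (fun s => f (x, s)) (f' (0, 1)) t :=
  hf.comp_hasDerivAt t ((hasDerivAt_const t x).prodMk (hasDerivAt_id t))

lemma contDiff_deriv_of_uncurry {f : E → 𝕜 → F} {m n : WithTop ℕ∞}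
    (hf : ContDiff 𝕜 m (Function.uncurry f)) (hmn : n + 1 ≤ m) (t : 𝕜) :
    ContDiff 𝕜 n fun x => deriv (f x) t :=
  hf.fderiv_apply contDiff_const contDiff_const hmn

lemma hasDerivAt_deriv_comm {f : 𝕜 → 𝕜 → F} {n : WithTop ℕ∞} {x t : 𝕜}
    (hf : ContDiffAt 𝕜 n (Function.uncurry f) (x, t)) (hn : minSmoothness 𝕜 2 ≤ n) :
    HasDerivAt (fun s => deriv (fun y => f y s) x) (deriv (fun y => deriv (f y) t) x) t := by
  set g := Function.uncurry f
  have hC2 : ContDiffAt 𝕜 2 g (x, t) := hf.of_le (le_minSmoothness.trans hn)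
  have hdiff : ∀ᶠ p in 𝓝 (x, t), DifferentiableAt 𝕜 g p :=
    (hC2.eventually (by simp)).mono fun p hp => hp.differentiableAt (by simp)
  have hfst : (fun s => deriv (fun y => f y s) x) =ᶠ[𝓝 t] fun s => fderiv 𝕜 g (x, s) (1, 0) :=
    ((Continuous.prodMk_right x).tendsto t).eventually hdiff |>.mono fun s hs =>
      (hasDerivAt_comp_prodMk_left hs.hasFDerivAt).deriv
  have hsnd : (fun y => deriv (f y) t) =ᶠ[𝓝 x] fun y => fderiv 𝕜 g (y, t) (0, 1) :=
    ((Continuous.prodMk_left t).tendsto x).eventually hdiff |>.mono fun y hy =>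
      (hasDerivAt_comp_prodMk_right hy.hasFDerivAt).deriv
  have hD : HasFDerivAt (fderiv 𝕜 g) (fderiv 𝕜 (fderiv 𝕜 g) (x, t)) (x, t) :=
    ((hC2.fderiv_right (m := 1) (by norm_num)).differentiableAt (by simp)).hasFDerivAt
  have hts : HasDerivAt (fun s => fderiv 𝕜 g (x, s) (1, 0))
      (fderiv 𝕜 (fderiv 𝕜 g) (x, t) (0, 1) (1, 0)) t := by
    simpa using (hasDerivAt_comp_prodMk_right hD).clm_apply (hasDerivAt_const t (1, 0))
  have hst : HasDerivAt (fun y => fderiv 𝕜 g (y, t) (0, 1))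
      (fderiv 𝕜 (fderiv 𝕜 g) (x, t) (1, 0) (0, 1)) x := by
    simpa using (hasDerivAt_comp_prodMk_left hD).clm_apply (hasDerivAt_const x (0, 1))
  rw [hsnd.deriv_eq, hst.deriv, ← (hf.isSymmSndFDerivAt hn).eq (0, 1) (1, 0)]
  exact hts.congr_of_eventuallyEq hfst

lemma deriv_sq_add_mul_deriv_sq {U : 𝕜 → 𝕜 → 𝕜} {n : WithTop ℕ∞} {x t : 𝕜}
    (hU : ContDiffAt 𝕜 n (Function.uncurry U) (x, t)) (hn : minSmoothness 𝕜 2 ≤ n) (μ : 𝕜) :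
    deriv (fun s => U x s ^ 2 + μ * deriv (fun y => U y s) x ^ 2) t
      = 2 * U x t * deriv (U x) t
        + 2 * μ * deriv (fun y => U y t) x * deriv (fun y => deriv (U y) t) x := by
  have hUt : HasDerivAt (U x) (deriv (U x) t) t :=
    (hasDerivAt_comp_prodMk_right ((hU.of_le (le_minSmoothness.trans hn)).differentiableAt
      (by simp)).hasFDerivAt).differentiableAt.hasDerivAt
  have hUxt := hasDerivAt_deriv_comm hU hn
  rw [((hUt.fun_pow 2).fun_add ((hUxt.fun_pow 2).const_mul μ)).deriv]
  push_cast
  ring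

end PartialDerivatives

section EqualWidth

/-- The flux `2μ U U_{xt} - (2/3) U³` of the second invariant of the EW equation at a fixed time,
as a function of the profiles `u = U(·, t)` and `v = Uₜ(·, t)`. -/
noncomputable def ewSecondInvariantFlux (μ : ℝ) (u v : ℝ → ℝ) (x : ℝ) : ℝ :=
  2 * μ * (u x * deriv v x) - 2 / 3 * u x ^ 3

variable {μ : ℝ} {u v : ℝ → ℝ}

lemma hasDerivAt_ewSecondInvariantFlux {x : ℝ} (hu : DifferentiableAt ℝ u x)
    (hv : DifferentiableAt ℝ (deriv v) x)
    (hEW : v x + u x * deriv u x - μ * deriv (deriv v) x = 0) :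
    HasDerivAt (ewSecondInvariantFlux μ u v) (2 * u x * v x + 2 * μ * deriv u x * deriv v x) x := by
  refine (((hu.hasDerivAt.fun_mul hv.hasDerivAt).const_mul (2 * μ)).fun_sub
    ((hu.hasDerivAt.fun_pow 3).const_mul (2 / 3))).congr_deriv ?_
  push_cast
  linear_combination (-2 * u x) * hEW

lemma tendsto_ewSecondInvariantFlux {l : Filter ℝ} {c : ℝ} (hu : Tendsto u l (nhds c))
    (huv : Tendsto (fun x => u x * deriv v x) l (nhds 0)) :
    Tendsto (ewSecondInvariantFlux μ u v) l (nhds (-(2 / 3 * c ^ 3))) := by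
  simpa using! (huv.const_mul (2 * μ)).sub ((hu.pow 3).const_mul (2 / 3))

lemma integral_eq_of_ew_profiles {U₀ U₁ : ℝ} (hu : Differentiable ℝ u)
    (hv : Differentiable ℝ (deriv v))
    (hEW : ∀ x, v x + u x * deriv u x - μ * deriv (deriv v) x = 0)
    (hint : Integrable fun x => 2 * u x * v x + 2 * μ * deriv u x * deriv v x)
    (huBot : Tendsto u atBot (nhds U₀)) (huTop : Tendsto u atTop (nhds U₁))
    (huvBot : Tendsto (fun x => u x * deriv v x) atBot (nhds 0))
    (huvTop : Tendsto (fun x => u x * deriv v x) atTop (nhds 0)) :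
    ∫ x, (2 * u x * v x + 2 * μ * deriv u x * deriv v x) = 2 / 3 * (U₀ ^ 3 - U₁ ^ 3) := by
  have hflux := fun x => hasDerivAt_ewSecondInvariantFlux (hu x) (hv x) (hEW x)
  rw [integral_of_hasDerivAt_of_tendsto hflux hint (tendsto_ewSecondInvariantFlux huBot huvBot)
    (tendsto_ewSecondInvariantFlux huTop huvTop)]
  ring

theorem ew_undular_bore_second_invariant_rate_general
    (μ U₀ U₁ : ℝ) (U : ℝ → ℝ → ℝ) (t : ℝ)
    (hreg : ContDiff ℝ 3 (fun p : ℝ × ℝ => U p.1 p.2))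
    (hEW : ∀ x : ℝ,
      deriv (fun s => U x s) t
        + U x t * deriv (fun y => U y t) x
        - μ * deriv (fun y => deriv (fun z => deriv (fun s => U z s) t) y) x = 0)
    (hint : Integrable (fun x =>
      2 * U x t * deriv (fun s => U x s) t
        + 2 * μ * deriv (fun y => U y t) x * deriv (fun z => deriv (fun s => U z s) t) x))
    (hUBot : Tendsto (fun x => U x t) atBot (nhds U₀))
    (hUTop : Tendsto (fun x => U x t) atTop (nhds U₁))
    (hUUxtTop : Tendsto (fun x => U x t * deriv (fun z => deriv (fun s => U z s) t) x)
      atTop (nhds 0))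
    (hUUxtBot : Tendsto (fun x => U x t * deriv (fun z => deriv (fun s => U z s) t) x)
      atBot (nhds 0)) :
    ∫ x : ℝ, deriv (fun s => (U x s) ^ 2 + μ * (deriv (fun y => U y s) x) ^ 2) t
      = 2 / 3 * (U₀ ^ 3 - U₁ ^ 3) := by
  have hUx : Differentiable ℝ fun x => U x t :=
    (hreg.comp (contDiff_prodMk_left t)).differentiable (by simp)
  have hUt : ContDiff ℝ (1 + 1) fun z => deriv (fun s => U z s) t :=
    contDiff_deriv_of_uncurry hreg (by norm_num) t
  have hUxt : Differentiable ℝ (deriv fun z => deriv (fun s => U z s) t) :=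
    hUt.deriv'.differentiable (by simp)
  have hmin : minSmoothness ℝ 2 ≤ 3 := by
    rw [minSmoothness_of_isRCLikeNormedField]
    norm_num
  simp_rw [fun x => deriv_sq_add_mul_deriv_sq (U := U) (hreg.contDiffAt (x := (x, t))) hmin μ]
  exact integral_eq_of_ew_profiles hUx hUxt hEW hint hUBot hUTop hUUxtBot hUUxtTop

end EqualWidth

/-- In the undular bore setting, the second invariant `I₂ = ∫ (U² + μ·Uₓ²) dx` of the
EW equation increases at the constant rate `M₂ = (2/3)U₀³`. -/
theorem ew_undular_bore_second_invariant_rate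
    (μ U₀ : ℝ) (U : ℝ → ℝ → ℝ)
    (hreg : ContDiff ℝ (⊤ : ℕ∞) (fun p : ℝ × ℝ => U p.1 p.2))
    (hEW : ∀ x t : ℝ,
      deriv (fun s => U x s) t
        + U x t * deriv (fun y => U y t) x
        - μ * deriv (fun y => deriv (fun z => deriv (fun s => U z s) t) y) x = 0)
    (t : ℝ)
    (hint : Integrable (fun x =>
      2 * U x t * deriv (fun s => U x s) t
        + 2 * μ * deriv (fun y => U y t) x * deriv (fun z => deriv (fun s => U z s) t) x))
    (hUBot : Tendsto (fun x => U x t) atBot (nhds U₀))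
    (hUTop : Tendsto (fun x => U x t) atTop (nhds 0))
    (hUUxtTop : Tendsto (fun x => U x t * deriv (fun z => deriv (fun s => U z s) t) x)
      atTop (nhds 0))
    (hUUxtBot : Tendsto (fun x => U x t * deriv (fun z => deriv (fun s => U z s) t) x)
      atBot (nhds 0)) :
    ∫ x : ℝ, deriv (fun s => (U x s) ^ 2 + μ * (deriv (fun y => U y s) x) ^ 2) t
      = (2 / 3) * U₀ ^ 3 := by
  simpa using ew_undular_bore_second_invariant_rate_general μ U₀ 0 U t (contDiff_infty.1 hreg 3)
    (fun x => hEW x t) hint hUBot hUTop hUUxtTop hUUxtBot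
end

section
/- Let U : ℝ × ℝ → ℝ be continuously differentiable in t with ∂ₓU also continuously differentiable in t, and suppose there are constants M₁, M₂ ≥ 0 with |∂ₜU(x,t)| ≤ M₁ and |∂ₜ∂ₓU(x,t)| ≤ M₂ for all (x,t). Fix x ∈ ℝ, a time level tₙ and a step Δt > 0, and write V = U(x, tₙ + Δt), Vₓ = ∂ₓU(x, tₙ + Δt), W = U(x, tₙ), Wₓ = ∂ₓU(x, tₙ). Then the Rubin–Graves linearization error satisfies V·Vₓ − ( Vₓ·W + V·Wₓ − Wₓ·W ) = (V − W)·(Vₓ − Wₓ), and hence | V·Vₓ − ( Vₓ·W + V·Wₓ − Wₓ·W ) | ≤ M₁·M₂·Δt²; that is, the Rubin–Graves linearization of the nonlinear term (U·Uₓ)^{n+1} is second-order accurate in Δt. -/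
open Real

/-- The Rubin–Graves linearization of the product `u * v` about the base values `u₀`, `v₀`: the
first-order Taylor expansion of multiplication at `(u₀, v₀)`. The factors keep their order, so that
the definition makes sense without commutativity. -/
def rubinGraves {R : Type*} [NonUnitalNonAssocRing R] (u v u₀ v₀ : R) : R :=
  u₀ * v + u * v₀ - u₀ * v₀

theorem mul_sub_rubinGraves {R : Type*} [NonUnitalNonAssocRing R] (u v u₀ v₀ : R) :
    u * v - rubinGraves u v u₀ v₀ = (u - u₀) * (v - v₀) := by
  simp only [rubinGraves, sub_mul, mul_sub]
  abel

theorem norm_mul_sub_rubinGraves_le {R : Type*} [NonUnitalSeminormedRing R] {u v u₀ v₀ : R}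
    {a b : ℝ} (hu : ‖u - u₀‖ ≤ a) (hv : ‖v - v₀‖ ≤ b) :
    ‖u * v - rubinGraves u v u₀ v₀‖ ≤ a * b := by
  rw [mul_sub_rubinGraves]
  exact norm_mul_le_of_le hu hv

theorem rubin_graves_linearization_second_order_general
    {𝕜 A : Type*} [RCLike 𝕜] [NonUnitalNormedRing A] [NormedSpace 𝕜 A]
    {f g : 𝕜 → A} {C D : ℝ} {t₀ t : 𝕜}
    (hf : ∀ τ ∈ segment ℝ t₀ t, DifferentiableAt 𝕜 f τ)
    (hg : ∀ τ ∈ segment ℝ t₀ t, DifferentiableAt 𝕜 g τ)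
    (hf_bound : ∀ τ ∈ segment ℝ t₀ t, ‖deriv f τ‖ ≤ C)
    (hg_bound : ∀ τ ∈ segment ℝ t₀ t, ‖deriv g τ‖ ≤ D) :
    f t * g t - rubinGraves (f t) (g t) (f t₀) (g t₀) = (f t - f t₀) * (g t - g t₀) ∧
    ‖f t * g t - rubinGraves (f t) (g t) (f t₀) (g t₀)‖ ≤ C * D * ‖t - t₀‖ ^ 2 := by
  refine ⟨mul_sub_rubinGraves _ _ _ _, ?_⟩
  have hconvex : Convex ℝ (segment ℝ t₀ t) := convex_segment t₀ t
  have hf_step : ‖f t - f t₀‖ ≤ C * ‖t - t₀‖ :=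
    hconvex.norm_image_sub_le_of_norm_deriv_le hf hf_bound
      (left_mem_segment ℝ t₀ t) (right_mem_segment ℝ t₀ t)
  have hg_step : ‖g t - g t₀‖ ≤ D * ‖t - t₀‖ :=
    hconvex.norm_image_sub_le_of_norm_deriv_le hg hg_bound
      (left_mem_segment ℝ t₀ t) (right_mem_segment ℝ t₀ t)
  calc ‖f t * g t - rubinGraves (f t) (g t) (f t₀) (g t₀)‖
      ≤ (C * ‖t - t₀‖) * (D * ‖t - t₀‖) := norm_mul_sub_rubinGraves_le hf_step hg_step
    _ = C * D * ‖t - t₀‖ ^ 2 := by ring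

/-- The Rubin–Graves linearization of the nonlinear term `(U·Uₓ)^{n+1}` is second-order
accurate in `Δt`: the linearization error equals `(V − W)·(Vₓ − Wₓ)` and is bounded by
`M₁·M₂·Δt²`. -/
theorem rubin_graves_linearization_second_order
    (U : ℝ → ℝ → ℝ) (M₁ M₂ : ℝ) (hM₁ : 0 ≤ M₁) (hM₂ : 0 ≤ M₂)
    (hreg₁ : ∀ x : ℝ, ContDiff ℝ 1 (fun s => U x s))
    (hreg₂ : ∀ x : ℝ, ContDiff ℝ 1 (fun s => deriv (fun y => U y s) x))
    (hb₁ : ∀ x t : ℝ, |deriv (fun s => U x s) t| ≤ M₁)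
    (hb₂ : ∀ x t : ℝ, |deriv (fun s => deriv (fun y => U y s) x) t| ≤ M₂)
    (x tn Δt : ℝ) (hΔt : 0 < Δt)
    (V Vx W Wx : ℝ)
    (hV : V = U x (tn + Δt)) (hVx : Vx = deriv (fun y => U y (tn + Δt)) x)
    (hW : W = U x tn) (hWx : Wx = deriv (fun y => U y tn) x) :
    V * Vx - (Vx * W + V * Wx - Wx * W) = (V - W) * (Vx - Wx) ∧
    |V * Vx - (Vx * W + V * Wx - Wx * W)| ≤ M₁ * M₂ * Δt ^ 2 := by
  rw [mul_comm Vx W, mul_comm Wx W]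
  subst hV hVx hW hWx
  simpa only [rubinGraves, add_sub_cancel_left, Real.norm_eq_abs, sq_abs] using
    rubin_graves_linearization_second_order_general (t₀ := tn) (t := tn + Δt)
      (fun τ _ => (hreg₁ x).differentiable one_ne_zero τ)
      (fun τ _ => (hreg₂ x).differentiable one_ne_zero τ)
      (fun τ _ => hb₁ x τ) (fun τ _ => hb₂ x τ)
end
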